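/- For every a ∈ PP_H, the polytope P_a has nonempty interior in ℝ^n (equivalently, P_a is n-dimensional) if and only if a lies in the topological interior of PP_H in ℝ^r. -/

import Mathlib

/-!
Both conditions are equivalent to strict feasibility: there is a point `x` with `-a i < ⟨v_i, x⟩`
for every `i`. Strict inequalities persist under small perturbations of `x` (so `P_a` has nonempty
interior) and of `a` (so `a` is interior to `PP_H`). Conversely, if `x` is interior to `P_a`, then
`x - t v_i ∈ P_a` for small `t > 0`, and since `v_i ≠ 0` this makes the `i`-th inequality strict at
`x`; and if `a` is interior to `PP_H`, then `P_{a - t(1, …, 1)}` is nonempty for small `t > 0`, and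
each of its points is strictly feasible for `a`.
-/

/-- The pairing `⟨v_i, x⟩ = ∑ j, v_i(j) * x(j)` between an integer vector and a real vector. -/
def dotv {n r : ℕ} (v : Fin r → Fin n → ℤ) (i : Fin r) (x : Fin n → ℝ) : ℝ :=
  ∑ j, (v i j : ℝ) * x j

/-- The polyhedron `P_a = {x ∈ ℝ^n : ⟨v_i, x⟩ ≥ -a_i for all i}`. -/
def Pa {n r : ℕ} (v : Fin r → Fin n → ℤ) (a : Fin r → ℝ) : Set (Fin n → ℝ) :=
  {x | ∀ i, -a i ≤ dotv v i x}

/-- The space of polytope presentations `PP_H = {a : P_a ≠ ∅}`. -/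
def PPH {n r : ℕ} (v : Fin r → Fin n → ℤ) : Set (Fin r → ℝ) :=
  {a | (Pa v a).Nonempty}

/-- An integer vector is primitive if the gcd of its coordinates is 1. -/
def IsPrimitiveVec {n : ℕ} (u : Fin n → ℤ) : Prop :=
  Finset.univ.gcd u = 1

/-- The convex cone generated by the `v_i` is all of `ℝ^n`. -/
def PosSpans {n r : ℕ} (v : Fin r → Fin n → ℤ) : Prop :=
  ∀ x : Fin n → ℝ, ∃ c : Fin r → ℝ, (∀ i, 0 ≤ c i) ∧
    ∀ j, x j = ∑ i, c i * (v i j : ℝ)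

lemma continuous_dotv {n r : ℕ} (v : Fin r → Fin n → ℤ) (i : Fin r) : Continuous (dotv v i) := by
  unfold dotv
  fun_prop

lemma IsPrimitiveVec.sum_sq_pos {n : ℕ} {u : Fin n → ℤ} (hu : IsPrimitiveVec u) :
    0 < ∑ j, (u j : ℝ) * u j := by
  obtain ⟨j, hj⟩ : ∃ j, u j ≠ 0 := by
    by_contra! h
    have h0 : Finset.univ.gcd u = 0 := Finset.gcd_eq_zero_iff.2 fun j _ => h j
    exact zero_ne_one (h0.symm.trans hu)
  have hj' : (u j : ℝ) ≠ 0 := by exact_mod_cast hj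
  exact Finset.sum_pos' (fun k _ => mul_self_nonneg _)
    ⟨j, Finset.mem_univ j, mul_self_pos.2 hj'⟩

/-- From an interior point of a set one can move a little in any prescribed direction. -/
lemma exists_pos_sub_smul_mem {ι : Type*} {s : Set (ι → ℝ)} {x : ι → ℝ} (hx : x ∈ interior s)
    (w : ι → ℝ) : ∃ t : ℝ, 0 < t ∧ x - t • w ∈ s := by
  have hc : Filter.Tendsto (fun t : ℝ => x - t • w) (nhdsWithin 0 (Set.Ioi 0)) (nhds x) := by
    have h : Continuous fun t : ℝ => x - t • w := by fun_prop
    simpa using (h.tendsto 0).mono_left nhdsWithin_le_nhds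
  have h1 := hc.eventually (mem_interior_iff_mem_nhds.1 hx)
  obtain ⟨t, ht, ht0⟩ := (h1.and self_mem_nhdsWithin).exists
  exact ⟨t, ht0, ht⟩

lemma interior_Pa_nonempty_iff {n r : ℕ} {v : Fin r → Fin n → ℤ}
    (hprim : ∀ i, IsPrimitiveVec (v i)) (a : Fin r → ℝ) :
    (interior (Pa v a)).Nonempty ↔ ∃ x, ∀ i, -a i < dotv v i x := by
  constructor
  · rintro ⟨x, hx⟩
    refine ⟨x, fun i => ?_⟩
    obtain ⟨t, ht, hmem⟩ := exists_pos_sub_smul_mem hx (fun j => (v i j : ℝ))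
    have h : dotv v i (x - t • fun j => (v i j : ℝ))
        = dotv v i x - t * ∑ j, (v i j : ℝ) * v i j := by
      simp only [dotv, Finset.mul_sum, ← Finset.sum_sub_distrib, Pi.sub_apply, Pi.smul_apply,
        smul_eq_mul]
      exact Finset.sum_congr rfl fun j _ => by ring
    have hi := hmem i
    rw [h] at hi
    linarith [mul_pos ht (hprim i).sum_sq_pos]
  · rintro ⟨x, hx⟩
    have ho : IsOpen {y | ∀ i, -a i < dotv v i y} := by
      simp only [Set.ofPred_forall]
      exact isOpen_iInter_of_finite fun i => isOpen_lt continuous_const (continuous_dotv v i)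
    exact ⟨x, interior_maximal (fun y hy i => (hy i).le) ho hx⟩

lemma mem_interior_PPH_iff {n r : ℕ} {v : Fin r → Fin n → ℤ} (a : Fin r → ℝ) :
    a ∈ interior (PPH v) ↔ ∃ x, ∀ i, -a i < dotv v i x := by
  constructor
  · intro ha
    obtain ⟨t, ht, x, hx⟩ := exists_pos_sub_smul_mem ha (fun _ => 1)
    refine ⟨x, fun i => ?_⟩
    have hi := hx i
    simp only [Pi.sub_apply, Pi.smul_apply, smul_eq_mul, mul_one] at hi
    linarith
  · rintro ⟨x, hx⟩
    have ho : IsOpen {b : Fin r → ℝ | ∀ i, -b i < dotv v i x} := by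
      simp only [Set.ofPred_forall]
      exact isOpen_iInter_of_finite fun i => isOpen_lt (by fun_prop) continuous_const
    have hsub : {b : Fin r → ℝ | ∀ i, -b i < dotv v i x} ⊆ PPH v :=
      fun b hb => ⟨x, fun i => (hb i).le⟩
    exact interior_maximal hsub ho hx

/-- for `a ∈ PP_H`, the polytope `P_a` has nonempty interior in `ℝ^n`
iff `a` lies in the topological interior of `PP_H` in `ℝ^r`. -/
theorem stmt2 {n r : ℕ} (hn : 1 ≤ n) (hr : 1 ≤ r)
    (v : Fin r → Fin n → ℤ) (hdist : Function.Injective v)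
    (hprim : ∀ i, IsPrimitiveVec (v i)) (hspan : PosSpans v) :
    ∀ a ∈ PPH v, ((interior (Pa v a)).Nonempty ↔ a ∈ interior (PPH v)) := by
  intro a _
  rw [interior_Pa_nonempty_iff hprim, mem_interior_PPH_iff]
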